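/- Let (E,F,G,H) be a quadruple of flags in ℝ^d with the maximum span property, and let 0 < i < d. Then the dihedrally permuted quadruples (G,H,E,F) and (E,H,G,F) also have the maximum span property, and the double ratios satisfy Z_i(E,F,G,H) = Z_{d−i}(G,H,E,F) and Z_i(E,F,G,H)·Z_i(E,H,G,F) = 1. -/

import Mathlib

noncomputable section

abbrev Vec (d : ℕ) : Type := Fin d → ℝ

/-- A complete flag in `ℝ^d`. -/
def IsFlag {d : ℕ} (F : ℕ → Submodule ℝ (Vec d)) : Prop :=
  Monotone F ∧ ∀ i, i ≤ d → Module.finrank ℝ (F i) = i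

/-- The maximum span property for a tuple of flags. -/
def MaxSpan {d t : ℕ} (F : Fin t → ℕ → Submodule ℝ (Vec d)) : Prop :=
  ∀ a : Fin t → ℕ, (∀ j, a j ≤ d) →
    Module.finrank ℝ ↥(⨆ j, F j (a j)) = min (∑ j, a j) d

/-- The wedge product of the concatenated vectors, viewed as a real number via
`⋀^d ℝ^d ≅ ℝ` (determinant in the standard basis); junk value `0` if the total
number of vectors is not `d`. -/
def wedgeDet {d n1 n2 n3 : ℕ} (u : Fin n1 → Vec d) (v : Fin n2 → Vec d)
    (w : Fin n3 → Vec d) : ℝ :=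
  if h : n1 + n2 + n3 = d then
    (Matrix.of fun i j => (Fin.append (Fin.append u v) w) (Fin.cast h.symm j) i).det
  else 0

/-- A choice, for each `k ≤ d`, of a spanning `k`-tuple of vectors of the member
`F k` of a flag; equivalently a choice of a nonzero element of `⋀^k F^(k)`. -/
def ChoiceFor {d : ℕ} (F : ℕ → Submodule ℝ (Vec d)) (e : (k : ℕ) → Fin k → Vec d) : Prop :=
  ∀ k, k ≤ d → Submodule.span ℝ (Set.range (e k)) = F k

/-- The `i`-th double ratio `Z_i(E,F,G,H)` computed from choices. -/
def doubleRatio {d : ℕ} (i : ℕ) (e g : (k : ℕ) → Fin k → Vec d) (f1 h1 : Vec d) : ℝ :=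
  -((wedgeDet (e i) (g (d-i-1)) ![f1] * wedgeDet (e (i-1)) (g (d-i)) ![h1]) /
    (wedgeDet (e i) (g (d-i-1)) ![h1] * wedgeDet (e (i-1)) (g (d-i)) ![f1]))

/-! Interchanging the first two factors of `e^(a) ∧ g^(b) ∧ f` only changes its sign, and this sign
depends on `a` and `b` but not on `f`. Each sign therefore occurs once in the numerator and once in
the denominator of a double ratio and cancels. Interchanging `f` and `h`, on the other hand,
interchanges numerator and denominator, so it inverts the double ratio; the maximum span property
makes the double ratio nonzero.
-/

namespace MaxSpan

variable {d s t : ℕ} {F : Fin t → ℕ → Submodule ℝ (Vec d)}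

theorem apply_zero_eq_bot (h : MaxSpan F) (j : Fin t) : F j 0 = ⊥ := by
  have hsup : ⨆ j, F j 0 = ⊥ :=
    Submodule.finrank_eq_zero.mp (by simpa using h (fun _ ↦ 0) (by simp))
  exact iSup_eq_bot.mp hsup j

theorem of_injective (h : MaxSpan F) {F' : Fin s → ℕ → Submodule ℝ (Vec d)} {σ : Fin s → Fin t}
    (hσ : Function.Injective σ) (hF' : ∀ k, F' k = F (σ k)) : MaxSpan F' := by
  intro a ha
  -- Extending `a` by zero adds only the zero-dimensional members of the other families.
  let b : Fin t → ℕ := Function.extend σ a fun _ ↦ 0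
  have hb : ∀ k, b (σ k) = a k := hσ.extend_apply a _
  have hb0 : ∀ j ∉ Set.range σ, b j = 0 := fun j hj ↦ Function.extend_apply' a _ j hj
  have hbd : ∀ j, b j ≤ d := by
    intro j
    by_cases hj : j ∈ Set.range σ
    · obtain ⟨k, rfl⟩ := hj
      exact (hb k).trans_le (ha k)
    · simp [hb0 j hj]
  have hsup : ⨆ k, F' k (a k) = ⨆ j, F j (b j) := by
    apply le_antisymm
    · exact iSup_le fun k ↦ le_iSup_of_le (σ k) (by rw [hF', hb])
    · refine iSup_le fun j ↦ ?_
      by_cases hj : j ∈ Set.range σ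
      · obtain ⟨k, rfl⟩ := hj
        exact le_iSup_of_le k (by rw [hF', hb])
      · simp [hb0 j hj, h.apply_zero_eq_bot]
  have hsum : ∑ k, a k = ∑ j, b j :=
    Fintype.sum_of_injective σ hσ a b hb0 fun k ↦ (hb k).symm
  rw [hsup, hsum]
  exact h b hbd

theorem finrank_eq (h : MaxSpan F) (j : Fin t) {k : ℕ} (hk : k ≤ d) :
    Module.finrank ℝ (F j k) = k := by
  have hj : MaxSpan fun _ : Fin 1 ↦ F j :=
    h.of_injective (Function.injective_of_subsingleton fun _ ↦ j) fun _ ↦ rfl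
  rw [← iSup_const (ι := Fin 1) (a := F j k)]
  simpa [hk] using hj (fun _ ↦ k) fun _ ↦ hk

theorem iSup_eq_top (h : MaxSpan F) {a : Fin t → ℕ} (ha : ∀ j, a j ≤ d) (hd : d ≤ ∑ j, a j) :
    ⨆ j, F j (a j) = ⊤ :=
  Submodule.eq_top_of_finrank_eq (by rw [h a ha, min_eq_right hd, Module.finrank_fin_fun])

end MaxSpan

theorem span_singleton_eq_of_finrank_eq_one {K V : Type*} [DivisionRing K] [AddCommGroup V]
    [Module K V] {S : Submodule K V} (hS : Module.finrank K S = 1) {x : V} (hx : x ∈ S)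
    (hx0 : x ≠ 0) : Submodule.span K {x} = S := by
  have : FiniteDimensional K S := Module.finite_of_finrank_eq_succ hS
  exact Submodule.eq_of_le_of_finrank_eq ((Submodule.span_singleton_le_iff_mem x S).mpr hx)
    ((finrank_span_singleton hx0).trans hS.symm)

section wedgeDet

variable {d n1 n2 n3 : ℕ}

/-- The positions of three consecutive blocks of lengths `n1`, `n2`, `n3` among `0, …, d - 1`.
Indexing by a disjoint union lets blocks be permuted without comparing casts between `Fin` types. -/
def blockEquiv (h : n1 + n2 + n3 = d) : (Fin n1 ⊕ Fin n2) ⊕ Fin n3 ≃ Fin d :=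
  (finSumFinEquiv.sumCongr (Equiv.refl _)).trans (finSumFinEquiv.trans (finCongr h))

theorem wedgeDet_eq_det (h : n1 + n2 + n3 = d) (u : Fin n1 → Vec d) (v : Fin n2 → Vec d)
    (w : Fin n3 → Vec d) :
    wedgeDet u v w =
      (Pi.basisFun ℝ (Fin d)).det (Sum.elim (Sum.elim u v) w ∘ (blockEquiv h).symm) := by
  have happend : Sum.elim (Sum.elim u v) w ∘ (blockEquiv h).symm =
      Fin.append (Fin.append u v) w ∘ Fin.cast h.symm := by
    rw [Equiv.comp_symm_eq]
    ext ((k | k) | k) <;> simp [blockEquiv]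
  rw [wedgeDet, dif_pos h, happend, Pi.basisFun_det_apply, ← Matrix.det_transpose]
  rfl

theorem wedgeDet_eq_zero_of_add_ne (h : n1 + n2 + n3 ≠ d) (u : Fin n1 → Vec d)
    (v : Fin n2 → Vec d) (w : Fin n3 → Vec d) : wedgeDet u v w = 0 :=
  dif_neg h

theorem exists_wedgeDet_swap (d n1 n2 n3 : ℕ) : ∃ ε : ℤˣ,
    ∀ (u : Fin n1 → Vec d) (v : Fin n2 → Vec d) (w : Fin n3 → Vec d),
      wedgeDet v u w = ε • wedgeDet u v w := by
  by_cases h : n1 + n2 + n3 = d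
  · have h' : n2 + n1 + n3 = d := by omega
    let swap : (Fin n2 ⊕ Fin n1) ⊕ Fin n3 ≃ (Fin n1 ⊕ Fin n2) ⊕ Fin n3 :=
      (Equiv.sumComm _ _).sumCongr (Equiv.refl _)
    let σ : Equiv.Perm (Fin d) := (blockEquiv h').symm.trans (swap.trans (blockEquiv h))
    refine ⟨σ.sign, fun u v w ↦ ?_⟩
    have hσ : Sum.elim (Sum.elim v u) w ∘ (blockEquiv h').symm =
        (Sum.elim (Sum.elim u v) w ∘ (blockEquiv h).symm) ∘ σ := by
      rw [Equiv.comp_symm_eq]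
      ext ((k | k) | k) <;> simp [σ, swap]
    rw [wedgeDet_eq_det h', wedgeDet_eq_det h, hσ, AlternatingMap.map_perm]
  · have h' : n2 + n1 + n3 ≠ d := by omega
    exact ⟨1, fun u v w ↦ by
      rw [wedgeDet_eq_zero_of_add_ne h', wedgeDet_eq_zero_of_add_ne h, smul_zero]⟩

theorem wedgeDet_ne_zero_of_span_eq_top (h : n1 + n2 + n3 = d) {u : Fin n1 → Vec d}
    {v : Fin n2 → Vec d} {w : Fin n3 → Vec d}
    (hspan : Submodule.span ℝ (Set.range u) ⊔ Submodule.span ℝ (Set.range v) ⊔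
      Submodule.span ℝ (Set.range w) = ⊤) : wedgeDet u v w ≠ 0 := by
  let c : Fin d → Vec d := Sum.elim (Sum.elim u v) w ∘ (blockEquiv h).symm
  have hc : Submodule.span ℝ (Set.range c) = ⊤ := by
    rw [(blockEquiv h).symm.surjective.range_comp, Set.Sum.elim_range, Set.Sum.elim_range,
      Submodule.span_union, Submodule.span_union, hspan]
  have hli : LinearIndependent ℝ c :=
    linearIndependent_of_top_le_span_of_card_eq_finrank hc.ge (by simp)
  rw [wedgeDet_eq_det h]
  exact ((Module.Basis.is_basis_iff_det _).mp ⟨hli, hc⟩).ne_zero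

theorem MaxSpan.wedgeDet_ne_zero {E G F : ℕ → Submodule ℝ (Vec d)} (hmax : MaxSpan ![E, G, F])
    {e g : (k : ℕ) → Fin k → Vec d} {f : Vec d} (he : ChoiceFor E e) (hg : ChoiceFor G g)
    (hf : f ∈ F 1) (hf0 : f ≠ 0) {a b : ℕ} (hab : a + b + 1 = d) :
    wedgeDet (e a) (g b) ![f] ≠ 0 := by
  have hF : Submodule.span ℝ (Set.range ![f]) = F 1 := by
    rw [Matrix.range_cons, Matrix.range_empty, Set.union_empty]
    exact span_singleton_eq_of_finrank_eq_one (hmax.finrank_eq 2 (by omega)) hf hf0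
  have htop : ⨆ j, ![E, G, F] j (![a, b, 1] j) = ⊤ :=
    hmax.iSup_eq_top (by simpa [Fin.forall_fin_succ] using ⟨by omega, by omega, by omega⟩)
      (by simp [Fin.sum_univ_three, hab])
  apply wedgeDet_ne_zero_of_span_eq_top hab
  rw [he a (by omega), hg b (by omega), hF]
  simpa [iSup_fin_three] using htop

end wedgeDet

section doubleRatio

variable {d : ℕ}

theorem doubleRatio_reverse {i : ℕ} (hi : i ≤ d) (e g : (k : ℕ) → Fin k → Vec d) (f1 h1 : Vec d) :
    doubleRatio (d - i) g e h1 f1 = doubleRatio i e g f1 h1 := by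
  obtain ⟨ε, hε⟩ := exists_wedgeDet_swap d i (d - i - 1) 1
  obtain ⟨δ, hδ⟩ := exists_wedgeDet_swap d (i - 1) (d - i) 1
  unfold doubleRatio
  rw [Nat.sub_sub_self hi]
  simp only [hε, hδ]
  rcases Int.units_eq_one_or ε with rfl | rfl <;> rcases Int.units_eq_one_or δ with rfl | rfl <;>
    simp [mul_comm]

theorem doubleRatio_swap_eq_inv (i : ℕ) (e g : (k : ℕ) → Fin k → Vec d) (f1 h1 : Vec d) :
    doubleRatio i e g h1 f1 = (doubleRatio i e g f1 h1)⁻¹ := by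
  rw [doubleRatio, doubleRatio, inv_neg, inv_div]

theorem MaxSpan.doubleRatio_ne_zero {E F G H : ℕ → Submodule ℝ (Vec d)}
    (hmax : MaxSpan ![E, F, G, H]) {i : ℕ} {e g : (k : ℕ) → Fin k → Vec d} {f1 h1 : Vec d}
    (he : ChoiceFor E e) (hg : ChoiceFor G g) (hf : f1 ∈ F 1) (hf0 : f1 ≠ 0)
    (hh : h1 ∈ H 1) (hh0 : h1 ≠ 0) (hi1 : 1 ≤ i) (hi2 : i < d) :
    doubleRatio i e g f1 h1 ≠ 0 := by
  have hEGF : MaxSpan ![E, G, F] :=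
    hmax.of_injective (σ := ![0, 2, 1]) (by decide) (by simp [Fin.forall_fin_succ])
  have hEGH : MaxSpan ![E, G, H] :=
    hmax.of_injective (σ := ![0, 2, 3]) (by decide) (by simp [Fin.forall_fin_succ])
  have hwedge_f {a b : ℕ} (hab : a + b + 1 = d) : wedgeDet (e a) (g b) ![f1] ≠ 0 :=
    hEGF.wedgeDet_ne_zero he hg hf hf0 hab
  have hwedge_h {a b : ℕ} (hab : a + b + 1 = d) : wedgeDet (e a) (g b) ![h1] ≠ 0 :=
    hEGH.wedgeDet_ne_zero he hg hh hh0 hab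
  have hi : i + (d - i - 1) + 1 = d := by omega
  have hi' : i - 1 + (d - i) + 1 = d := by omega
  exact neg_ne_zero.mpr (div_ne_zero (mul_ne_zero (hwedge_f hi) (hwedge_h hi'))
    (mul_ne_zero (hwedge_h hi) (hwedge_f hi')))

end doubleRatio

theorem stmt12_general {d : ℕ} (E F G H : ℕ → Submodule ℝ (Vec d))
    (hmax : MaxSpan ![E, F, G, H]) (i : ℕ) (hi1 : 1 ≤ i) (hi2 : i < d) :
    MaxSpan ![G, H, E, F] ∧ MaxSpan ![E, H, G, F] ∧
    ∀ (e g : (k : ℕ) → Fin k → Vec d) (f1 h1 : Vec d),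
      ChoiceFor E e → ChoiceFor G g →
      f1 ∈ F 1 → f1 ≠ 0 → h1 ∈ H 1 → h1 ≠ 0 →
      doubleRatio i e g f1 h1 = doubleRatio (d - i) g e h1 f1 ∧
      doubleRatio i e g f1 h1 * doubleRatio i e g h1 f1 = 1 := by
  refine ⟨?_, ?_, fun e g f1 h1 he hg hf hf0 hh hh0 ↦ ⟨?_, ?_⟩⟩
  · exact hmax.of_injective (σ := ![2, 3, 0, 1]) (by decide) (by simp [Fin.forall_fin_succ])
  · exact hmax.of_injective (σ := ![0, 3, 2, 1]) (by decide) (by simp [Fin.forall_fin_succ])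
  · exact (doubleRatio_reverse hi2.le e g f1 h1).symm
  · rw [doubleRatio_swap_eq_inv i e g f1 h1]
    exact mul_inv_cancel₀ (hmax.doubleRatio_ne_zero he hg hf hf0 hh hh0 hi1 hi2)

/-- Remark 2.7 (symmetries of double ratios): for a maximum span quadruple
`(E,F,G,H)`, the dihedrally permuted quadruples `(G,H,E,F)` and `(E,H,G,F)` have
the maximum span property and `Z_i(E,F,G,H) = Z_{d-i}(G,H,E,F)` and
`Z_i(E,F,G,H) · Z_i(E,H,G,F) = 1`. -/
theorem stmt12 {d : ℕ} (E F G H : ℕ → Submodule ℝ (Vec d))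
    (hE : IsFlag E) (hF : IsFlag F) (hG : IsFlag G) (hH : IsFlag H)
    (hmax : MaxSpan ![E, F, G, H])
    (i : ℕ) (hi1 : 1 ≤ i) (hi2 : i < d) :
    MaxSpan ![G, H, E, F] ∧ MaxSpan ![E, H, G, F] ∧
    ∀ (e g : (k : ℕ) → Fin k → Vec d) (f1 h1 : Vec d),
      ChoiceFor E e → ChoiceFor G g →
      f1 ∈ F 1 → f1 ≠ 0 → h1 ∈ H 1 → h1 ≠ 0 →
      doubleRatio i e g f1 h1 = doubleRatio (d - i) g e h1 f1 ∧
      doubleRatio i e g f1 h1 * doubleRatio i e g h1 f1 = 1 :=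
  stmt12_general E F G H hmax i hi1 hi2
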